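/- Let G=(V,E,σ) be a finite weighted graph with σ_min = min_{e∈E} σ(e) > 0, let Γ be a nonempty family of walks on G, let p ≥ 2, and let ρ* be the unique extremal density for Mod_p(Γ). Then for every admissible ρ ∈ A(Γ), ‖ρ − ρ*‖_p^p ≤ (2^{p−1}/σ_min)·(ℰ_p(ρ) − Mod_p(Γ)), where ‖f‖_p = (Σ_{e∈E} |f(e)|^p)^{1/p} is the unweighted p-norm on ℝ^E. -/

import Mathlib

/-!
The midpoint of `ρ` and `ρstar` is admissible, so its energy is at least the modulus.
Clarkson's inequality for `p ≥ 2`, applied edge by edge (`scalar_clarkson`) and summed with the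
weights `σ`, then bounds the energy of `(ρ - ρstar) / 2` by half the energy gap
`energy ρ - modulus`. Pulling out the factor `2 ^ (-p)` and bounding each weight from below by
the least one gives the estimate.
-/

open scoped BigOperators

variable {V : Type*} [Fintype V] [DecidableEq V]

/-- The ρ-length of a walk: ℓ_ρ(γ) = Σ_{e∈E} N(γ,e) ρ(e), where N(γ,e) is the number
of times the walk γ traverses the edge e. -/
noncomputable def rhoLength (G : SimpleGraph V) [DecidableRel G.Adj]
    (ρ : G.edgeSet → ℝ) {u v : V} (w : G.Walk u v) : ℝ :=
  ∑ e : G.edgeSet, (w.edges.count ↑e : ℝ) * ρ e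

/-- The admissible set A(Γ): densities that are nonnegative and give every walk of Γ
ρ-length at least one. -/
def IsAdmissible (G : SimpleGraph V) [DecidableRel G.Adj]
    (Γ : Set (Σ (u : V) (v : V), G.Walk u v)) (ρ : G.edgeSet → ℝ) : Prop :=
  (∀ e, 0 ≤ ρ e) ∧ ∀ γ ∈ Γ, 1 ≤ rhoLength G ρ γ.2.2

/-- The p-energy ℰ_p(ρ) = Σ_{e∈E} σ(e) |ρ(e)|^p, for 1 ≤ p < ∞. -/
noncomputable def energy (G : SimpleGraph V) [DecidableRel G.Adj]
    (σ : G.edgeSet → ℝ) (p : ℝ) (ρ : G.edgeSet → ℝ) : ℝ :=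
  ∑ e : G.edgeSet, σ e * |ρ e| ^ p

/-- The ∞-energy ℰ_∞(ρ) = max_{e∈E} |ρ(e)|. -/
noncomputable def energyInf (G : SimpleGraph V) [DecidableRel G.Adj]
    (ρ : G.edgeSet → ℝ) : ℝ :=
  ⨆ e : G.edgeSet, |ρ e|

/-- The p-modulus Mod_p(Γ) = inf_{ρ ∈ A(Γ)} ℰ_p(ρ), for 1 ≤ p < ∞. -/
noncomputable def modulus (G : SimpleGraph V) [DecidableRel G.Adj]
    (σ : G.edgeSet → ℝ) (p : ℝ) (Γ : Set (Σ (u : V) (v : V), G.Walk u v)) : ℝ :=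
  sInf (energy G σ p '' {ρ | IsAdmissible G Γ ρ})

/-- The ∞-modulus Mod_∞(Γ) = inf_{ρ ∈ A(Γ)} ℰ_∞(ρ). -/
noncomputable def modulusInf (G : SimpleGraph V) [DecidableRel G.Adj]
    (Γ : Set (Σ (u : V) (v : V), G.Walk u v)) : ℝ :=
  sInf (energyInf G '' {ρ | IsAdmissible G Γ ρ})

/-- The connecting family Γ(s,t): all walks that start at s and end at t. -/
def connectingFamily (G : SimpleGraph V) (s t : V) :
    Set (Σ (u : V) (v : V), G.Walk u v) :=
  {γ | γ.1 = s ∧ γ.2.1 = t}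

/-- The minimum graph length ℓ(Γ) = inf_{γ ∈ Γ} ℓ(γ) (smallest number of hops). -/
noncomputable def minLength (G : SimpleGraph V)
    (Γ : Set (Σ (u : V) (v : V), G.Walk u v)) : ℕ :=
  sInf {n : ℕ | ∃ γ ∈ Γ, γ.2.2.length = n}

/-- |φ(x) - φ(y)|, the potential drop of φ : V → ℝ across an edge, as a function
on unordered pairs. -/
noncomputable def potDrop (φ : V → ℝ) : Sym2 V → ℝ :=
  Sym2.lift ⟨fun x y => |φ x - φ y|, fun x y => abs_sub_comm (φ x) (φ y)⟩

/-- Scalar form of Clarkson's inequality, with `p`-th powers written as `p / 2`-th powers of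
squares. It combines superadditivity and convexity of `t ↦ t ^ (p / 2)` with the
parallelogram law. -/
lemma scalar_clarkson {p : ℝ} (hp : 2 ≤ p) (a b : ℝ) :
    |(a + b) / 2| ^ p + |(a - b) / 2| ^ p ≤ (|a| ^ p + |b| ^ p) / 2 := by
  have key : ∀ x : ℝ, |x| ^ p = (x ^ 2) ^ (p / 2) := fun x => by
    rw [← sq_abs, ← Real.rpow_natCast, ← Real.rpow_mul (abs_nonneg x)]
    congr 1
    push_cast
    ring
  have hq : 1 ≤ p / 2 := by linarith
  simp only [key]
  have super := Real.add_rpow_le_rpow_add (sq_nonneg ((a + b) / 2)) (sq_nonneg ((a - b) / 2)) hq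
  have conv := (convexOn_rpow hq).2 (Set.mem_Ici.2 (sq_nonneg a)) (Set.mem_Ici.2 (sq_nonneg b))
    (by norm_num : (0 : ℝ) ≤ 1 / 2) (by norm_num : (0 : ℝ) ≤ 1 / 2) (by norm_num)
  simp only [smul_eq_mul] at conv
  rw [show ((a + b) / 2) ^ 2 + ((a - b) / 2) ^ 2 = 1 / 2 * a ^ 2 + 1 / 2 * b ^ 2 by ring] at super
  linarith

lemma modulus_le_energy (G : SimpleGraph V) [DecidableRel G.Adj]
    {σ : G.edgeSet → ℝ} (hσ : ∀ e, 0 < σ e) (p : ℝ)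
    {Γ : Set (Σ (u : V) (v : V), G.Walk u v)}
    {ρ : G.edgeSet → ℝ} (hρ : IsAdmissible G Γ ρ) :
    modulus G σ p Γ ≤ energy G σ p ρ := by
  refine csInf_le ⟨0, ?_⟩ ⟨ρ, hρ, rfl⟩
  rintro _ ⟨τ, -, rfl⟩
  exact Finset.sum_nonneg fun e _ =>
    mul_nonneg (hσ e).le (Real.rpow_nonneg (abs_nonneg _) _)

lemma IsAdmissible.midpoint (G : SimpleGraph V) [DecidableRel G.Adj]
    {Γ : Set (Σ (u : V) (v : V), G.Walk u v)} {ρ τ : G.edgeSet → ℝ}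
    (hρ : IsAdmissible G Γ ρ) (hτ : IsAdmissible G Γ τ) :
    IsAdmissible G Γ fun e => (ρ e + τ e) / 2 := by
  refine ⟨fun e => by have := hρ.1 e; have := hτ.1 e; positivity, fun γ hγ => ?_⟩
  have h : rhoLength G (fun e => (ρ e + τ e) / 2) γ.2.2
      = (rhoLength G ρ γ.2.2 + rhoLength G τ γ.2.2) / 2 := by
    simp only [rhoLength, ← Finset.sum_add_distrib, Finset.sum_div]
    exact Finset.sum_congr rfl fun e _ => by ring
  have := hρ.2 γ hγ
  have := hτ.2 γ hγ
  linarith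

/-- (Clarkson, p ≥ 2) for the extremal density ρ* and any admissible ρ,
‖ρ - ρ*‖_p^p ≤ (2^{p-1}/σ_min) (ℰ_p(ρ) - Mod_p(Γ)). -/
theorem clarkson_estimate_p_ge_two
    (G : SimpleGraph V) [DecidableRel G.Adj] [Nonempty ↥G.edgeSet]
    (σ : G.edgeSet → ℝ) (hσ : ∀ e, 0 < σ e)
    (Γ : Set (Σ (u : V) (v : V), G.Walk u v))
    (hne : Γ.Nonempty) (hΓ : ∀ γ ∈ Γ, 0 < γ.2.2.length)
    (p : ℝ) (hp : 2 ≤ p)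
    (ρstar : G.edgeSet → ℝ)
    (hadm : IsAdmissible G Γ ρstar)
    (hext : energy G σ p ρstar = modulus G σ p Γ)
    (ρ : G.edgeSet → ℝ) (hρ : IsAdmissible G Γ ρ) :
    ∑ e : G.edgeSet, |ρ e - ρstar e| ^ p
      ≤ ((2 : ℝ) ^ (p - 1) / ⨅ e : G.edgeSet, σ e)
          * (energy G σ p ρ - modulus G σ p Γ) := by
  set m := ⨅ e : G.edgeSet, σ e
  have hm_le : ∀ e, m ≤ σ e := fun e => ciInf_le (Set.finite_range σ).bddBelow e
  have hm : 0 < m := by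
    obtain ⟨e, he⟩ := exists_eq_ciInf_of_finite (f := σ)
    exact (hσ e).trans_eq he
  have hmid := modulus_le_energy G hσ p (hρ.midpoint G hadm)
  have hcl : energy G σ p (fun e => (ρ e + ρstar e) / 2)
      + energy G σ p (fun e => (ρ e - ρstar e) / 2)
      ≤ (energy G σ p ρ + energy G σ p ρstar) / 2 := by
    simp only [energy, ← Finset.sum_add_distrib, Finset.sum_div]
    refine Finset.sum_le_sum fun e _ => ?_
    have := mul_le_mul_of_nonneg_left (scalar_clarkson hp (ρ e) (ρstar e)) (hσ e).le
    linarith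
  have hlow : m * ∑ e : G.edgeSet, |ρ e - ρstar e| ^ p
      ≤ 2 ^ p * energy G σ p (fun e => (ρ e - ρstar e) / 2) := by
    simp only [energy, Finset.mul_sum]
    refine Finset.sum_le_sum fun e _ => ?_
    have h2 : (2 : ℝ) ^ p ≠ 0 := (Real.rpow_pos_of_pos two_pos p).ne'
    rw [abs_div, abs_two, Real.div_rpow (abs_nonneg _) zero_le_two]
    calc m * |ρ e - ρstar e| ^ p ≤ σ e * |ρ e - ρstar e| ^ p := by
          gcongr
          exact hm_le e
      _ = _ := by field_simp
  have hdiff : energy G σ p (fun e => (ρ e - ρstar e) / 2)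
      ≤ (energy G σ p ρ - modulus G σ p Γ) / 2 := by
    linarith
  rw [div_mul_eq_mul_div, le_div_iff₀ hm, mul_comm, Real.rpow_sub_one two_ne_zero]
  calc _ ≤ _ := hlow
    _ ≤ 2 ^ p * ((energy G σ p ρ - modulus G σ p Γ) / 2) := by gcongr
    _ = _ := by ring
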